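/- Let n ≥ 1 and let Q ⊆ ℝ^n × ℝ be an open set satisfying condition (A) with constant θ₀ ∈ (0,1). Then every X₀ ∈ ∂_p Q satisfies Wiener's criterion: for every λ > 1, the series ∑_{k=1}^∞ λ^k · cap(Q^c ∩ {X ∈ ℝ^n × ℝ : λ^{k+1} ≥ F(X₀ − X) ≥ λ^k}) diverges to +∞, where Q^c denotes the complement of Q in ℝ^n × ℝ. -/

import Mathlib

/-!
Write `X₀ = (x₀, t₀)`. Two facts give the divergence.

* `volume_le_thermalCap`: a set `A` of finite volume inside a time slab of length `T` has thermal
  capacity at least `|A| / T`, since `F(·, t)` has spatial integral `1` and so the potential of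
  Lebesgue measure on the slab is at most `T`.
* `le_heatF_of_mem_cyl`: on the part `A` of the cylinder of radius `r` at `X₀` that lies at time
  distance more than `ε r²` below `X₀`, one has `F(X₀ - ·) ≥ c r⁻ⁿ`, with
  `c = (4π)^(-n/2) exp(-1/(4ε))`.

Given an index `m`, choose `r` with `c r⁻ⁿ = λ^(m+1)`. Then `A \ Q` is covered by the shells of index
`≥ m`, so the tail of the series from `m` on is at least `λ^(m+1) |A \ Q| / r²`. For `ε = θ₀ / 2`,
condition (A) gives `|A \ Q| ≥ (θ₀ / 2) |C_r|`, and `|C_r|` is proportional to `r^(n+2)`, so the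
tails are bounded below by a positive constant independent of `m`. The series cannot converge.
-/

open MeasureTheory Real Set Metric Filter

noncomputable section

/-- The space ℝ^n × ℝ (spatial × time). -/
abbrev Spc (n : ℕ) := EuclideanSpace ℝ (Fin n) × ℝ

/-- Parabolic cylinder C_r(Y) = B_r(y) × (s - r², s). -/
def pCyl (n : ℕ) (Y : Spc n) (r : ℝ) : Set (Spc n) :=
  (Metric.ball Y.1 r) ×ˢ (Set.Ioo (Y.2 - r ^ 2) Y.2)

/-- |C_r|: the measure of a parabolic cylinder of radius r. -/
def cylVol (n : ℕ) (r : ℝ) : ENNReal :=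
  volume (pCyl n ((0 : EuclideanSpace ℝ (Fin n)), (0 : ℝ)) r)

/-- The parabolic boundary of an open set Q. -/
def pBoundary (n : ℕ) (Q : Set (Spc n)) : Set (Spc n) :=
  {X | X ∈ frontier Q ∧ ∃ δ > (0 : ℝ), ∃ γ : ℝ → EuclideanSpace ℝ (Fin n),
    ContinuousOn γ (Set.Ico X.2 (X.2 + δ)) ∧ γ X.2 = X.1 ∧
    ∀ t ∈ Set.Ioo X.2 (X.2 + δ), (γ t, t) ∈ Q}

/-- Condition (A): exterior measure condition. -/
def condA (n : ℕ) (Q : Set (Spc n)) (θ₀ : ℝ) : Prop :=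
  ∀ X ∈ pBoundary n Q, ∀ r > (0 : ℝ),
    ENNReal.ofReal θ₀ * cylVol n r < volume (pCyl n X r \ Q)

/-- Parabolic distance. -/
def pDist (n : ℕ) (X Y : Spc n) : ℝ := max ‖X.1 - Y.1‖ (Real.sqrt |X.2 - Y.2|)

/-- The fundamental solution of the heat equation. -/
def heatF (n : ℕ) (x : EuclideanSpace ℝ (Fin n)) (t : ℝ) : ℝ :=
  if 0 < t then (4 * π * t) ^ (-(n : ℝ) / 2) * Real.exp (-‖x‖ ^ 2 / (4 * t)) else 0

/-- Heat ball E(X, r). -/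
def heatBall (n : ℕ) (X : Spc n) (r : ℝ) : Set (Spc n) :=
  {Y | r ≤ heatF n (X.1 - Y.1) (X.2 - Y.2)}

/-- Thermal capacity of a set. -/
def thermalCap (n : ℕ) (K : Set (Spc n)) : ENNReal :=
  sSup {m : ENNReal | ∃ μ : Measure (Spc n), IsFiniteMeasure μ ∧ μ Kᶜ = 0 ∧
    (∀ X : Spc n, ∫⁻ Y, ENNReal.ofReal (heatF n (X.1 - Y.1) (X.2 - Y.2)) ∂μ ≤ 1) ∧
    m = μ Set.univ}

/-- Heat shell {Y : a ≤ F(Y₀ - Y) ≤ b}. -/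
def heatShell (n : ℕ) (Y₀ : Spc n) (a b : ℝ) : Set (Spc n) :=
  {Y | a ≤ heatF n (Y₀.1 - Y.1) (Y₀.2 - Y.2) ∧ heatF n (Y₀.1 - Y.1) (Y₀.2 - Y.2) ≤ b}


theorem measurable_heatF_sub (n : ℕ) (X : Spc n) :
    Measurable fun Y : Spc n => heatF n (X.1 - Y.1) (X.2 - Y.2) := by
  unfold heatF
  refine Measurable.ite ?_ ?_ measurable_const
  · exact measurableSet_lt measurable_const (by fun_prop)
  · fun_prop

theorem lintegral_heatF_le (n : ℕ) (x : EuclideanSpace ℝ (Fin n)) (t : ℝ) :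
    ∫⁻ y, ENNReal.ofReal (heatF n (x - y) t) ≤ 1 := by
  by_cases ht : 0 < t
  · rw [lintegral_sub_left_eq_self (fun y => ENNReal.ofReal (heatF n y t)) x]
    simp only [heatF, if_pos ht]
    have hb : 0 < 1 / (4 * t) := by positivity
    have hI := GaussianFourier.integral_rexp_neg_mul_sq_norm
      (V := EuclideanSpace ℝ (Fin n)) hb
    have hint : Integrable fun v : EuclideanSpace ℝ (Fin n) => rexp (-(1 / (4 * t)) * ‖v‖ ^ 2) := by
      by_contra h
      rw [integral_undef h] at hI
      have : 0 < (π / (1 / (4 * t))) ^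
          ((Module.finrank ℝ (EuclideanSpace ℝ (Fin n)) : ℝ) / 2) := by positivity
      linarith
    have he : ∀ v : EuclideanSpace ℝ (Fin n),
        -‖v‖ ^ 2 / (4 * t) = -(1 / (4 * t)) * ‖v‖ ^ 2 := fun v => by ring
    simp only [he]
    rw [← ofReal_integral_eq_lintegral_ofReal (hint.const_mul _)
      (Eventually.of_forall fun v => by positivity), integral_const_mul, hI,
      finrank_euclideanSpace_fin]
    have h4 : π / (1 / (4 * t)) = 4 * π * t := by field_simp
    rw [h4, ← Real.rpow_add (by positivity)]
    have : -(n : ℝ) / 2 + n / 2 = 0 := by ring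
    simp [this]
  · simp [heatF, ht]

theorem lintegral_heatF_slab_le (n : ℕ) (X : Spc n) (a T : ℝ) :
    ∫⁻ Y in (Set.univ ×ˢ Set.Ioo a (a + T) : Set (Spc n)),
      ENNReal.ofReal (heatF n (X.1 - Y.1) (X.2 - Y.2)) ≤ ENNReal.ofReal T := by
  rw [Measure.volume_eq_prod, ← Measure.prod_restrict, Measure.restrict_univ,
    lintegral_prod_symm _ (measurable_heatF_sub n X).ennreal_ofReal.aemeasurable]
  calc ∫⁻ s in Set.Ioo a (a + T), ∫⁻ y, ENNReal.ofReal (heatF n (X.1 - y) (X.2 - s))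
      ≤ ∫⁻ _ in Set.Ioo a (a + T), 1 := lintegral_mono fun s => lintegral_heatF_le n _ _
    _ = ENNReal.ofReal T := by simp

/-- The normalised Lebesgue measure on `A` is admissible in the supremum defining the capacity. -/
theorem volume_le_thermalCap (n : ℕ) {A K : Set (Spc n)} {a T : ℝ} (hT : 0 < T)
    (hA : MeasurableSet A) (hAK : A ⊆ K) (hAs : A ⊆ Set.univ ×ˢ Set.Ioo a (a + T))
    (hfin : volume A ≠ ⊤) :
    (ENNReal.ofReal T)⁻¹ * volume A ≤ thermalCap n K := by
  have hT0 : ENNReal.ofReal T ≠ 0 := by simpa using hT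
  refine le_sSup ⟨(ENNReal.ofReal T)⁻¹ • volume.restrict A, ⟨?_⟩, ?_, fun X => ?_, ?_⟩
  · simpa using ENNReal.mul_lt_top (ENNReal.inv_lt_top.2 (by simpa using hT)) hfin.lt_top
  · have : Kᶜ ∩ A = ∅ := by
      ext x
      simpa using fun h h' => h (hAK h')
    simp [Measure.restrict_apply' hA, this]
  · rw [lintegral_smul_measure, smul_eq_mul]
    calc _ ≤ (ENNReal.ofReal T)⁻¹ * ENNReal.ofReal T := by
          gcongr
          exact (lintegral_mono_set hAs).trans (lintegral_heatF_slab_le n X a T)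
      _ = 1 := ENNReal.inv_mul_cancel hT0 ENNReal.ofReal_ne_top
  · simp

/-- Away from its top, a cylinder of radius `r` sees the heat kernel at least of size `r⁻ⁿ`. -/
theorem le_heatF_of_mem_cyl (n : ℕ) {ε r : ℝ} (hε : 0 < ε) (hr : 0 < r)
    {x : EuclideanSpace ℝ (Fin n)} {t : ℝ} (hx : ‖x‖ ≤ r) (ht : ε * r ^ 2 < t) (ht' : t ≤ r ^ 2) :
    (4 * π) ^ (-(n : ℝ) / 2) * rexp (-(1 / (4 * ε))) / r ^ n ≤ heatF n x t := by
  have h0 : 0 < t := lt_trans (by positivity) ht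
  rw [heatF, if_pos h0]
  have h1 : (4 * π) ^ (-(n : ℝ) / 2) / r ^ n ≤ (4 * π * t) ^ (-(n : ℝ) / 2) := by
    have h2 : (r ^ 2) ^ (-(n : ℝ) / 2) = (r ^ n)⁻¹ := by
      rw [← Real.rpow_natCast r 2, ← Real.rpow_mul hr.le, ← Real.rpow_natCast r n,
        ← Real.rpow_neg hr.le]
      congr 1
      push_cast
      ring
    rw [div_eq_mul_inv, ← h2, ← Real.mul_rpow (by positivity) (by positivity)]
    refine Real.rpow_le_rpow_of_nonpos (by positivity) (by gcongr) ?_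
    have : (0 : ℝ) ≤ n := n.cast_nonneg
    linarith
  have h3 : -(1 / (4 * ε)) ≤ -‖x‖ ^ 2 / (4 * t) := by
    rw [neg_div, neg_le_neg_iff, div_le_div_iff₀ (by positivity) (by positivity)]
    have : ‖x‖ ^ 2 ≤ r ^ 2 := by gcongr
    nlinarith
  calc _ = (4 * π) ^ (-(n : ℝ) / 2) / r ^ n * rexp (-(1 / (4 * ε))) := by ring
    _ ≤ _ := by gcongr

theorem volume_ball_prod (n : ℕ) (x : EuclideanSpace ℝ (Fin n)) {r : ℝ} (hr : 0 < r)
    {S : Set ℝ} : volume (Metric.ball x r ×ˢ S : Set (Spc n)) =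
      ENNReal.ofReal (r ^ n) * volume (Metric.ball (0 : EuclideanSpace ℝ (Fin n)) 1) * volume S := by
  rw [Measure.volume_eq_prod, Measure.prod_prod, Measure.addHaar_ball_of_pos _ _ hr,
    finrank_euclideanSpace_fin]

/-- condition (A) implies Wiener's criterion at every point of the
parabolic boundary, i.e. every (A)-domain is regular.  The series
`∑_{k=1}^∞ λ^k cap(Qᶜ ∩ {λ^{k+1} ≥ F(X₀-X) ≥ λ^k})` is written as a `tsum` over
`k : ℕ` via the shift `k ↦ k+1`. -/
theorem condA_implies_wiener (n : ℕ) (hn : 1 ≤ n) (Q : Set (Spc n)) (hQ : IsOpen Q)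
    (θ₀ : ℝ) (hθ₀ : θ₀ ∈ Set.Ioo (0 : ℝ) 1) (hA : condA n Q θ₀) :
    ∀ X₀ ∈ pBoundary n Q, ∀ lam : ℝ, 1 < lam →
      ∑' k : ℕ, ENNReal.ofReal (lam ^ (k + 1)) *
        thermalCap n (Qᶜ ∩ heatShell n X₀ (lam ^ (k + 1)) (lam ^ (k + 2))) = ⊤ := by
  intro X₀ hX₀ lam hlam
  obtain ⟨hθ, -⟩ := hθ₀
  have hn0 : n ≠ 0 := by omega
  have hlam0 : 0 < lam := by linarith
  set V : ENNReal := volume (Metric.ball (0 : EuclideanSpace ℝ (Fin n)) 1) with hV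
  have hV0 : V ≠ 0 := (Metric.measure_ball_pos _ _ one_pos).ne'
  have hVt : V ≠ ⊤ := measure_ball_lt_top.ne
  set ε : ℝ := θ₀ / 2 with hε
  have hε0 : 0 < ε := by positivity
  set c : ℝ := (4 * π) ^ (-(n : ℝ) / 2) * rexp (-(1 / (4 * ε))) with hc
  have hc0 : 0 < c := by positivity
  set a : ℕ → ENNReal := fun k => ENNReal.ofReal (lam ^ (k + 1)) *
        thermalCap n (Qᶜ ∩ heatShell n X₀ (lam ^ (k + 1)) (lam ^ (k + 2))) with ha
  have key : ∀ m : ℕ, ENNReal.ofReal (c * ε) * V ≤ ∑' k, a (k + m) := by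
    intro m
    set L : ℝ := lam ^ (m + 1) with hL
    have hL0 : 0 < L := by positivity
    -- the radius for which the lower bound of `heatF` on the cylinder is exactly `L`
    obtain ⟨r, hr, hrn⟩ : ∃ r : ℝ, 0 < r ∧ r ^ n = c / L :=
      ⟨(c / L) ^ ((n : ℝ)⁻¹), by positivity, Real.rpow_inv_natCast_pow (by positivity) hn0⟩
    set S : Set (Spc n) :=
      Metric.ball X₀.1 r ×ˢ Set.Ioo (X₀.2 - r ^ 2) (X₀.2 - ε * r ^ 2) with hS
    set A : Set (Spc n) := S \ Q with hAdef
    have hAm : MeasurableSet A :=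
      (measurableSet_ball.prod measurableSet_Ioo).diff hQ.measurableSet
    have hSt : volume S ≠ ⊤ := by
      rw [hS, volume_ball_prod n _ hr, Real.volume_Ioo]
      exact ENNReal.mul_ne_top (ENNReal.mul_ne_top ENNReal.ofReal_ne_top hVt) ENNReal.ofReal_ne_top
    have hvol : ENNReal.ofReal (ε * (r ^ n * r ^ 2)) * V ≤ volume A := by
      have h1 := (hA X₀ hX₀ r hr).le
      -- by the choice of `ε`, the discarded top layer has half the volume granted by (A)
      have h2 : pCyl n X₀ r \ Q ⊆
          A ∪ Metric.ball X₀.1 r ×ˢ Set.Ico (X₀.2 - ε * r ^ 2) X₀.2 := by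
        rintro ⟨y, s⟩ ⟨⟨hy, hs1, hs2⟩, hq⟩
        by_cases h : s < X₀.2 - ε * r ^ 2
        · exact Or.inl ⟨⟨hy, hs1, h⟩, hq⟩
        · exact Or.inr ⟨hy, not_lt.1 h, hs2⟩
      have h3 := h1.trans ((measure_mono h2).trans (measure_union_le _ _))
      rw [cylVol, pCyl, volume_ball_prod n _ hr, volume_ball_prod n _ hr, Real.volume_Ioo,
        Real.volume_Ico] at h3
      have e1 : ENNReal.ofReal θ₀ * (ENNReal.ofReal (r ^ n) * V *
          ENNReal.ofReal ((0 : ℝ) - (0 - r ^ 2))) =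
          ENNReal.ofReal (ε * (r ^ n * r ^ 2)) * V + ENNReal.ofReal (ε * (r ^ n * r ^ 2)) * V := by
        rw [← add_mul, ← ENNReal.ofReal_add (by positivity) (by positivity), mul_right_comm,
          ← mul_assoc, ← ENNReal.ofReal_mul (by positivity), ← ENNReal.ofReal_mul (by positivity)]
        congr 2
        rw [hε]
        ring
      have e2 : ENNReal.ofReal (r ^ n) * V * ENNReal.ofReal (X₀.2 - (X₀.2 - ε * r ^ 2)) =
          ENNReal.ofReal (ε * (r ^ n * r ^ 2)) * V := by
        rw [mul_right_comm, ← ENNReal.ofReal_mul (by positivity)]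
        congr 2
        ring
      simp only [← hV] at h3
      rw [e1, e2] at h3
      exact (ENNReal.add_le_add_iff_right (ENNReal.mul_ne_top ENNReal.ofReal_ne_top hVt)).1 h3
    set K : ℕ → Set (Spc n) := fun k => heatShell n X₀ (lam ^ (k + m + 1)) (lam ^ (k + m + 2))
      with hK
    have hKm : ∀ k, MeasurableSet (K k) := fun k =>
      (measurableSet_le measurable_const (measurable_heatF_sub n X₀)).inter
        (measurableSet_le (measurable_heatF_sub n X₀) measurable_const)
    have hcov : A ⊆ ⋃ k, A ∩ K k := by
      rintro ⟨y, s⟩ hY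
      obtain ⟨⟨hy, hs1, hs2⟩, -⟩ := id hY
      have hF : L ≤ heatF n (X₀.1 - y) (X₀.2 - s) := by
        have h := le_heatF_of_mem_cyl n hε0 hr (x := X₀.1 - y) (t := X₀.2 - s)
          (by simpa [dist_eq_norm'] using (mem_ball.1 hy).le)
          (by dsimp only at hs2; linarith) (by dsimp only at hs1; linarith)
        rw [← hc, hrn] at h
        rwa [div_div_cancel₀ hc0.ne'] at h
      obtain ⟨k, hk1, hk2⟩ := exists_nat_pow_near ((one_le_div hL0).2 hF) hlam
      rw [le_div_iff₀ hL0] at hk1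
      rw [div_lt_iff₀ hL0] at hk2
      refine mem_iUnion.2 ⟨k, hY, ?_, ?_⟩
      · calc lam ^ (k + m + 1) = lam ^ k * L := by rw [hL]; ring
          _ ≤ _ := hk1
      · calc _ ≤ _ := hk2.le
          _ = lam ^ (k + m + 2) := by rw [hL]; ring
    have hterm : ∀ k, ENNReal.ofReal L * ((ENNReal.ofReal (r ^ 2))⁻¹ * volume (A ∩ K k)) ≤
        a (k + m) := by
      intro k
      refine mul_le_mul' (ENNReal.ofReal_le_ofReal ?_)
        (volume_le_thermalCap n (a := X₀.2 - r ^ 2) (by positivity) (hAm.inter (hKm k)) ?_ ?_ ?_)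
      · exact pow_le_pow_right₀ hlam.le (by omega)
      · exact fun Y hY => ⟨hY.1.2, hY.2⟩
      · rintro ⟨y, s⟩ ⟨⟨⟨-, hs1, hs2⟩, -⟩, -⟩
        refine ⟨mem_univ _, hs1, ?_⟩
        have : 0 < ε * r ^ 2 := by positivity
        dsimp only at hs2 ⊢
        linarith
      · exact measure_ne_top_of_subset (fun Y hY => hY.1.1) hSt
    calc ENNReal.ofReal (c * ε) * V
        = ENNReal.ofReal L * ((ENNReal.ofReal (r ^ 2))⁻¹ *
            (ENNReal.ofReal (ε * (r ^ n * r ^ 2)) * V)) := by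
          rw [← ENNReal.ofReal_inv_of_pos (by positivity), ← mul_assoc, ← mul_assoc,
            ← ENNReal.ofReal_mul (by positivity), ← ENNReal.ofReal_mul (by positivity), hrn]
          congr 2
          field_simp
      _ ≤ ENNReal.ofReal L * ((ENNReal.ofReal (r ^ 2))⁻¹ * ∑' k, volume (A ∩ K k)) := by
          gcongr
          exact hvol.trans ((measure_mono hcov).trans (measure_iUnion_le _))
      _ = ∑' k, ENNReal.ofReal L * ((ENNReal.ofReal (r ^ 2))⁻¹ * volume (A ∩ K k)) := by
          rw [ENNReal.tsum_mul_left, ENNReal.tsum_mul_left]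
      _ ≤ ∑' k, a (k + m) := ENNReal.tsum_le_tsum hterm
  -- the tails of a convergent series tend to zero
  by_contra hne
  have h0 := ge_of_tendsto' (ENNReal.tendsto_sum_nat_add a hne) key
  have hpos : ENNReal.ofReal (c * ε) ≠ 0 := by
    simpa using mul_pos hc0 hε0
  exact mul_ne_zero hpos hV0 (le_antisymm h0 bot_le)

end
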